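/- arXiv:1410.7724 — 6 statements merged into one kernel-verified Lean document; each statement's English description precedes it below -/
import Mathlib

section
/- Let G=(V,E) be a finite directed graph with a weight function wt: E → Σ into a unital quantale Σ, and let d(u,v) = ⨆_{P: u⇝v} ⊗(P) denote the distance. Let u,v ∈ V and let B ⊆ V be a set of nodes such that every path P: u⇝v in G contains a node of B. Then d(u,v) = ⨆_{z ∈ B} d(u,z) ⊗ d(z,v). -/
/-- `IsPathList E u v p`: the list `p` is the node sequence of a path from `u` to `v`
in the directed graph with edge relation `E`. Nodes may repeat; a single node `u`
(i.e. `p = [u]`) is a path of length 0 from `u` to `u`. A node occurs on the path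
iff it is a member of `p`. -/
def IsPathList {V : Type*} (E : V → V → Prop) (u v : V) (p : List V) : Prop :=
  p.head? = some u ∧ p.getLast? = some v ∧ p.Chain' E

/-- The weight `⊗(P)` of the path with node sequence `p`: the ordered product of the
weights of its edges; the empty product (length-0 path) is `1̄`. -/
def pathWeight {V Q : Type*} [Monoid Q] (wt : V → V → Q) (p : List V) : Q :=
  ((p.zip p.tail).map fun e => wt e.1 e.2).prod

/-- The distance `d(u,v) = ⨆_{P : u ⇝ v} ⊗(P)`, equal to `0̄ = ⊥` if no path exists. -/
noncomputable def pathDist {V Q : Type*} [Monoid Q] [CompleteLattice Q]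
    (E : V → V → Prop) (wt : V → V → Q) (u v : V) : Q :=
  ⨆ p : {p : List V // IsPathList E u v p}, pathWeight wt p.val

theorem pathWeight_split_aux {V Q : Type*} [Monoid Q] (wt : V → V → Q) (z : V) (l₂ : List V) :
    ∀ l₁ : List V, pathWeight wt (l₁ ++ z :: l₂) =
      pathWeight wt (l₁ ++ [z]) * pathWeight wt (z :: l₂)
  | [] => by simp [pathWeight]
  | [a] => by simp [pathWeight]
  | a :: b :: l => by
    have ih := pathWeight_split_aux wt z l₂ (b :: l)
    simp only [pathWeight, List.cons_append, List.tail_cons, List.zip_cons_cons, List.map_cons,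
      List.prod_cons, mul_assoc] at ih ⊢
    rw [ih]

theorem isPathList_split_aux {V : Type*} (E : V → V → Prop) (u v z : V) (l₁ l₂ : List V) :
    IsPathList E u v (l₁ ++ z :: l₂) ↔
      IsPathList E u z (l₁ ++ [z]) ∧ IsPathList E z v (z :: l₂) := by
  have h : (l₁ ++ z :: l₂).IsChain E ↔ (l₁ ++ [z]).IsChain E ∧ (z :: l₂).IsChain E :=
    List.isChain_split
  unfold IsPathList List.Chain'
  rw [h]
  cases l₁ <;> simp [List.getLast?_append, List.getLast?_cons] <;> tauto

/-- in a unital quantale, if `B ⊆ V` is such that every path `P : u ⇝ v`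
contains a node of `B`, then `d(u,v) = ⨆_{z ∈ B} d(u,z) ⊗ d(z,v)`. -/
theorem stmt5 {V Q : Type*} [Finite V] [Monoid Q] [CompleteLattice Q] [IsQuantale Q]
    (E : V → V → Prop) (wt : V → V → Q) (u v : V) (B : Set V)
    (hB : ∀ p : List V, IsPathList E u v p → ∃ z ∈ B, z ∈ p) :
    pathDist E wt u v = ⨆ z ∈ B, pathDist E wt u z * pathDist E wt z v := by
  apply le_antisymm
  · refine iSup_le ?_
    rintro ⟨p, hp⟩
    obtain ⟨z, hz, hzp⟩ := hB p hp
    obtain ⟨l₁, l₂, rfl⟩ := List.append_of_mem hzp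
    have h := (isPathList_split_aux E u v z l₁ l₂).1 hp
    refine le_trans ?_ (le_iSup₂ (f := fun z _ => pathDist E wt u z * pathDist E wt z v) z hz)
    simp only [pathWeight_split_aux wt z l₂ l₁]
    exact mul_le_mul'
      (le_iSup (fun p : {p : List V // IsPathList E u z p} => pathWeight wt p.val) ⟨_, h.1⟩)
      (le_iSup (fun p : {p : List V // IsPathList E z v p} => pathWeight wt p.val) ⟨_, h.2⟩)
  · refine iSup₂_le fun z _ => ?_
    unfold pathDist
    rw [Quantale.iSup_mul_distrib]
    refine iSup_le ?_
    rintro ⟨p, hp⟩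
    rw [Quantale.mul_iSup_distrib]
    refine iSup_le ?_
    rintro ⟨q, hq⟩
    obtain ⟨l₁, rfl⟩ := List.getLast?_eq_some_iff.1 hp.2.1
    obtain ⟨l₂, rfl⟩ := List.head?_eq_some_iff.1 hq.1
    have h := (isPathList_split_aux E u v z l₁ l₂).2 ⟨hp, hq⟩
    simp only [← pathWeight_split_aux wt z l₂ l₁]
    exact le_iSup (fun p : {p : List V // IsPathList E u v p} => pathWeight wt p.val) ⟨_, h⟩
end

section
/- Let G=(V,E) be a finite directed graph with a weight function wt: E → Σ into a unital quantale Σ. For S ⊆ V, let d_S(u,v) = ⨆ ⊗(P) over all paths P: u⇝v whose intermediate nodes all lie in S, and for a ∈ Σ let a★ = ⨆_{n ≥ 0} aⁿ (where a⁰ = 1̄). Then for all u,v,x ∈ V and S ⊆ V: d_{S∪{x}}(u,v) = d_S(u,v) ⊕ (d_S(u,x) ⊗ (d_S(x,x))★ ⊗ d_S(x,v)). -/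
/-- The intermediate nodes of a path with node sequence `x_1, …, x_k, y_k`:
the nodes `x_2, …, x_k`, i.e. all nodes except the first and the last. -/
def intermediates {V : Type*} (p : List V) : List V := p.dropLast.tail

/-- `d_S(u,v)`: the join of the weights of all paths `u ⇝ v` whose intermediate nodes
all lie in `S`. -/
noncomputable def pathDistRes {V Q : Type*} [Monoid Q] [CompleteLattice Q]
    (E : V → V → Prop) (wt : V → V → Q) (S : Set V) (u v : V) : Q :=
  ⨆ p : {p : List V // IsPathList E u v p ∧ ∀ x ∈ intermediates p, x ∈ S},
    pathWeight wt p.val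

/-- The closure `a★ = ⨆_{n ≥ 0} aⁿ` (with `a⁰ = 1̄`). -/
noncomputable def qstar {Q : Type*} [Monoid Q] [CompleteLattice Q] (a : Q) : Q :=
  ⨆ n : ℕ, a ^ n

theorem path_ind {V Q : Type*} [Monoid Q] (E : V → V → Prop) (wt : V → V → Q) (S : Set V) (v : V)
    (P : V → Q → Prop) (h1 : P v 1) (h2 : ∀ u, E u v → P u (wt u v))
    (h3 : ∀ u w q, E u w → w ∈ S → P w q → P u (wt u w * q)) (l : List V) :
    ∀ u, IsPathList E u v (u :: l) → (∀ x ∈ intermediates (u :: l), x ∈ S) →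
      P u (pathWeight wt (u :: l)) := by
  induction l with
  | nil =>
    intro u h _
    have : u = v := by simpa using h.2.1
    subst this
    simpa [pathWeight] using h1
  | cons w l ih =>
    intro u h hi
    obtain ⟨_, hl, hc⟩ := h
    have hE : E u w := (List.isChain_cons_cons.1 hc).1
    have hc' : (w :: l).IsChain E := (List.isChain_cons_cons.1 hc).2
    cases l with
    | nil =>
      have : w = v := by simpa using hl
      subst this
      simpa [pathWeight] using h2 u hE
    | cons z l =>
      have hw : w ∈ S := hi w (by simp [intermediates])
      have := h3 u w _ hE hw (ih w ⟨rfl, by simpa using hl, hc'⟩ (by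
        intro y hy
        apply hi
        simp [intermediates] at hy ⊢
        exact Or.inr hy))
      simpa [pathWeight] using this

theorem dist_le {V Q : Type*} [Monoid Q] [CompleteLattice Q] (E : V → V → Prop) (wt : V → V → Q)
    (S : Set V) (u v : V) (b : Q)
    (H : ∀ l, IsPathList E u v (u :: l) → (∀ x ∈ intermediates (u :: l), x ∈ S) →
      pathWeight wt (u :: l) ≤ b) : pathDistRes E wt S u v ≤ b := by
  refine iSup_le ?_
  rintro ⟨p, hp, hi⟩
  cases p with
  | nil => simp [IsPathList] at hp
  | cons a l =>
    have : a = u := by simpa using hp.1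
    subst this
    exact H l hp hi

theorem le_dist {V Q : Type*} [Monoid Q] [CompleteLattice Q] (E : V → V → Prop) (wt : V → V → Q)
    (S : Set V) (u v : V) (p : List V) (h : IsPathList E u v p)
    (hi : ∀ x ∈ intermediates p, x ∈ S) : pathWeight wt p ≤ pathDistRes E wt S u v :=
  le_iSup (fun p : {p : List V // IsPathList E u v p ∧ ∀ x ∈ intermediates p, x ∈ S} =>
    pathWeight wt p.val) ⟨p, h, hi⟩

theorem one_le_dist {V Q : Type*} [Monoid Q] [CompleteLattice Q] (E : V → V → Prop)
    (wt : V → V → Q) (S : Set V) (u : V) : 1 ≤ pathDistRes E wt S u u := by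
  have := le_dist E wt S u u [u] ⟨rfl, rfl, List.isChain_singleton _⟩ (by simp [intermediates])
  simpa [pathWeight] using this

theorem edge_le_dist {V Q : Type*} [Monoid Q] [CompleteLattice Q] (E : V → V → Prop)
    (wt : V → V → Q) (S : Set V) (u v : V) (h : E u v) : wt u v ≤ pathDistRes E wt S u v := by
  have := le_dist E wt S u v [u, v] ⟨rfl, rfl, List.isChain_pair.2 h⟩ (by simp [intermediates])
  simpa [pathWeight] using this

theorem step_le_dist {V Q : Type*} [Monoid Q] [CompleteLattice Q] [IsQuantale Q]
    (E : V → V → Prop) (wt : V → V → Q) (S : Set V) (u w v : V) (h : E u w) (hw : w ∈ S) :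
    wt u w * pathDistRes E wt S w v ≤ pathDistRes E wt S u v := by
  conv_lhs => rw [pathDistRes, Quantale.mul_iSup_distrib]
  refine iSup_le ?_
  rintro ⟨p, hp, hi⟩
  cases p with
  | nil => simp [IsPathList] at hp
  | cons a l =>
    have : a = w := by simpa using hp.1
    subst this
    have := le_dist E wt S u v (u :: a :: l)
      ⟨rfl, by simpa using hp.2.1, List.isChain_cons_cons.2 ⟨h, hp.2.2⟩⟩ (by
        intro y hy
        cases l with
        | nil => simp [intermediates] at hy
        | cons z l =>
          simp [intermediates] at hy hi
          rcases hy with rfl | hy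
          · exact hw
          · exact hi y hy)
    simpa [pathWeight] using this

theorem comp_le_dist {V Q : Type*} [Monoid Q] [CompleteLattice Q] [IsQuantale Q]
    (E : V → V → Prop) (wt : V → V → Q) (S : Set V) (u w v : V) (hw : w ∈ S) :
    pathDistRes E wt S u w * pathDistRes E wt S w v ≤ pathDistRes E wt S u v := by
  conv_lhs => rw [pathDistRes, Quantale.iSup_mul_distrib]
  refine iSup_le ?_
  rintro ⟨p, hp, hi⟩
  cases p with
  | nil => simp [IsPathList] at hp
  | cons a l =>
    have : a = u := by simpa using hp.1
    subst this
    refine path_ind E wt S w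
      (fun y q => q * pathDistRes E wt S w v ≤ pathDistRes E wt S y v) ?_ ?_ ?_ l a hp hi
    · simp
    · intro y hy
      exact step_le_dist E wt S y w v hy hw
    · intro y z q hE hz hq
      rw [mul_assoc]
      exact (mul_le_mul_right hq _).trans (step_le_dist E wt S y z v hE hz)

theorem dist_mono {V Q : Type*} [Monoid Q] [CompleteLattice Q] (E : V → V → Prop)
    (wt : V → V → Q) (S T : Set V) (hST : S ⊆ T) (u v : V) :
    pathDistRes E wt S u v ≤ pathDistRes E wt T u v :=
  dist_le _ _ _ _ _ _ fun _ h hi => le_dist _ _ _ _ _ _ h fun y hy => hST (hi y hy)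

/-- in a unital quantale, for all `u, v, x ∈ V` and `S ⊆ V`:
`d_{S∪{x}}(u,v) = d_S(u,v) ⊕ (d_S(u,x) ⊗ (d_S(x,x))★ ⊗ d_S(x,v))`. -/
theorem stmt6 {V Q : Type*} [Finite V] [Monoid Q] [CompleteLattice Q] [IsQuantale Q]
    (E : V → V → Prop) (wt : V → V → Q) (u v x : V) (S : Set V) :
    pathDistRes E wt (S ∪ {x}) u v =
      pathDistRes E wt S u v ⊔
        (pathDistRes E wt S u x * qstar (pathDistRes E wt S x x) *
          pathDistRes E wt S x v) := by
  apply le_antisymm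
  · refine dist_le _ _ _ _ _ _ fun l h hi => ?_
    refine path_ind E wt (S ∪ {x}) v (fun u q => q ≤ pathDistRes E wt S u v ⊔
        (pathDistRes E wt S u x * qstar (pathDistRes E wt S x x) *
          pathDistRes E wt S x v)) ?_ ?_ ?_ l u h hi
    · exact le_sup_of_le_left (one_le_dist E wt S v)
    · intro y hy
      exact le_sup_of_le_left (edge_le_dist E wt S y v hy)
    · intro y w q hE hw hq
      refine (mul_le_mul_right hq _).trans ?_
      rcases hw with hw | hw
      · rw [Quantale.mul_sup_distrib, ← mul_assoc, ← mul_assoc]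
        gcongr
        · exact step_le_dist E wt S y w v hE hw
        · exact step_le_dist E wt S y w x hE hw
      · have hw' : w = x := hw
        subst hw'
        apply le_sup_of_le_right
        rw [mul_assoc (pathDistRes E wt S y w)]
        refine mul_le_mul' (edge_le_dist E wt S y w hE) (sup_le ?_ ?_)
        · calc pathDistRes E wt S w v = 1 * pathDistRes E wt S w v := (one_mul _).symm
            _ ≤ _ := by
              gcongr
              exact le_iSup_of_le 0 (by simp)
        · gcongr
          rw [qstar, Quantale.mul_iSup_distrib]
          refine iSup_le fun n => ?_
          rw [← pow_succ']
          exact le_iSup (fun n : ℕ => pathDistRes E wt S w w ^ n) (n + 1)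
  · have hm := dist_mono E wt S (S ∪ {x}) Set.subset_union_left
    have hx : x ∈ S ∪ {x} := Or.inr rfl
    refine sup_le (hm u v) ?_
    have hs : qstar (pathDistRes E wt S x x) ≤ pathDistRes E wt (S ∪ {x}) x x := by
      refine iSup_le fun n => ?_
      induction n with
      | zero => simpa using one_le_dist E wt (S ∪ {x}) x
      | succ n ih =>
        rw [pow_succ]
        exact (mul_le_mul' ih (hm x x)).trans (comp_le_dist E wt _ x x x hx)
    exact (mul_le_mul' ((mul_le_mul' (hm u x) hs).trans (comp_le_dist E wt _ u x x hx))
      (hm x v)).trans (comp_le_dist E wt _ u x v hx)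
end

section
/- Let G=(V,E) be a finite directed graph with a weight function wt: E → Σ into a unital quantale Σ such that wt(e) ≤ 1̄ for every edge e (i.e., the semiring has trivial closure: s★ = 1̄ for all s). Then for all u,v ∈ V the distance is realized by acyclic paths: d(u,v) = ⨆ ⊗(P) over the (finitely many) simple paths P: u⇝v, i.e., paths in which no node repeats. -/
theorem pw_cons_cons {V Q : Type*} [Monoid Q] (wt : V → V → Q) (a b : V) (l : List V) :
    pathWeight wt (a :: b :: l) = wt a b * pathWeight wt (b :: l) := by
  simp [pathWeight]

theorem pw_suffix {V Q : Type*} [Monoid Q] [CompleteLattice Q] [IsQuantale Q]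
    (E : V → V → Prop) (wt : V → V → Q)
    (hwt : ∀ a b : V, E a b → wt a b ≤ 1) (x : V) (t : List V) :
    ∀ s : List V, List.IsChain E (s ++ x :: t) →
      pathWeight wt (s ++ x :: t) ≤ pathWeight wt (x :: t) := by
  intro s
  induction s with
  | nil => intro _; exact le_rfl
  | cons a s ih =>
    intro h
    obtain ⟨b, l, hl⟩ : ∃ b l, s ++ x :: t = b :: l := by
      cases s with
      | nil => exact ⟨_, _, rfl⟩
      | cons c s => exact ⟨_, _, rfl⟩
    rw [List.cons_append] at h ⊢
    rw [hl] at h ih ⊢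
    rw [List.isChain_cons_cons] at h
    rw [pw_cons_cons]
    calc wt a b * pathWeight wt (b :: l) ≤ 1 * pathWeight wt (b :: l) :=
          mul_le_mul_left (hwt a b h.1) _
      _ ≤ _ := by rw [one_mul]; exact ih h.2

theorem exists_simple {V Q : Type*} [Monoid Q] [CompleteLattice Q] [IsQuantale Q]
    (E : V → V → Prop) (wt : V → V → Q)
    (hwt : ∀ a b : V, E a b → wt a b ≤ 1) (v : V) :
    ∀ (p : List V) (u : V), (u :: p).getLast? = some v → List.IsChain E (u :: p) →
      ∃ q : List V, (u :: q).getLast? = some v ∧ List.IsChain E (u :: q) ∧ (u :: q).Nodup ∧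
        pathWeight wt (u :: p) ≤ pathWeight wt (u :: q) := by
  intro p
  induction p with
  | nil => intro u h1 h2; exact ⟨[], h1, h2, by simp, le_rfl⟩
  | cons a r ih =>
    intro u h1 h2
    rw [List.isChain_cons_cons] at h2
    rw [List.getLast?_cons_cons] at h1
    obtain ⟨q, k1, k2, k3, k4⟩ := ih a h1 h2.2
    by_cases hu : u ∈ a :: q
    · obtain ⟨s, t, hst⟩ := List.append_of_mem hu
      rw [hst] at k1 k2 k3 k4
      refine ⟨t, ?_, ?_, ?_, ?_⟩
      · rw [List.getLast?_append_cons] at k1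
        exact k1
      · exact k2.right_of_append
      · exact k3.of_append_right
      · rw [pw_cons_cons]
        calc wt u a * pathWeight wt (a :: r) ≤ 1 * pathWeight wt (a :: r) :=
              mul_le_mul_left (hwt u a h2.1) _
          _ ≤ pathWeight wt (s ++ u :: t) := by rw [one_mul]; exact k4
          _ ≤ _ := pw_suffix E wt hwt u t s k2
    · refine ⟨a :: q, ?_, ?_, ?_, ?_⟩
      · rw [List.getLast?_cons_cons]; exact k1
      · exact List.isChain_cons_cons.2 ⟨h2.1, k2⟩
      · exact List.nodup_cons.2 ⟨hu, k3⟩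
      · rw [pw_cons_cons, pw_cons_cons]
        exact mul_le_mul_right k4 _

/-- in a unital quantale, if `wt(e) ≤ 1̄` for every edge `e` (trivial
closure), then the distance is realized by acyclic paths:
`d(u,v)` equals the join of `⊗(P)` over the simple paths `P : u ⇝ v`. -/
theorem stmt8 {V Q : Type*} [Finite V] [Monoid Q] [CompleteLattice Q] [IsQuantale Q]
    (E : V → V → Prop) (wt : V → V → Q)
    (hwt : ∀ a b : V, E a b → wt a b ≤ 1) (u v : V) :
    pathDist E wt u v =
      ⨆ p : {p : List V // IsPathList E u v p ∧ p.Nodup}, pathWeight wt p.val := by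
  apply le_antisymm
  · refine iSup_le ?_
    rintro ⟨p, h1, h2, h3⟩
    cases p with
    | nil => simp at h1
    | cons x p =>
      simp only [List.head?_cons, Option.some.injEq] at h1
      subst h1
      obtain ⟨q, k1, k2, k3, k4⟩ := exists_simple E wt hwt v p x h2 h3
      exact k4.trans (le_iSup
        (fun p : {p : List V // IsPathList E x v p ∧ p.Nodup} => pathWeight wt p.val)
        ⟨x :: q, ⟨rfl, k1, k2⟩, k3⟩)
  · refine iSup_le ?_
    rintro ⟨p, h, _⟩
    exact le_iSup (fun p : {p : List V // IsPathList E u v p} => pathWeight wt p.val) ⟨p, h⟩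
end

section
/- Let G=(V,E) be a finite directed graph with a weight function wt: E → [0,∞] (the extended nonnegative reals), and for a path P define its weight as the sum of wt over its edges (0 for a path of length 0). Define the shortest-path distance d(u,v) as the infimum over all paths P: u⇝v of the weight of P, with d(u,v) = ∞ if no such path exists. If u,v ∈ V and B ⊆ V is a set of nodes such that every path P: u⇝v contains a node of B, then d(u,v) = ⨅_{z ∈ B} (d(u,z) + d(z,v)). -/
open scoped ENNReal

/-- The weight of the path with node sequence `p`: the sum of the weights of its
edges (`0` for a path of length 0). -/
noncomputable def pathWeightSum {V : Type*} (wt : V → V → ℝ≥0∞) (p : List V) : ℝ≥0∞ :=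
  ((p.zip p.tail).map fun e => wt e.1 e.2).sum

/-- The shortest-path distance `d(u,v)`: the infimum over all paths `P : u ⇝ v` of the
weight of `P`, equal to `∞` if no path exists. -/
noncomputable def spDist {V : Type*} (E : V → V → Prop) (wt : V → V → ℝ≥0∞)
    (u v : V) : ℝ≥0∞ :=
  ⨅ p : {p : List V // IsPathList E u v p}, pathWeightSum wt p.val

theorem aux_weight {V : Type*} (wt : V → V → ℝ≥0∞) (a : List V) (z : V) (b : List V) :
    pathWeightSum wt (a ++ z :: b) = pathWeightSum wt (a ++ [z]) + pathWeightSum wt (z :: b) := by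
  induction a with
  | nil => simp [pathWeightSum]
  | cons x a ih =>
    cases a with
    | nil => simp [pathWeightSum]
    | cons y a =>
      have h : ∀ l : List V, pathWeightSum wt (x :: y :: l)
          = wt x y + pathWeightSum wt (y :: l) := by
        intro l; simp [pathWeightSum]
      simp only [List.cons_append] at ih ⊢
      rw [h, h, ih, add_assoc]

theorem aux_path {V : Type*} (E : V → V → Prop) (u v : V) (a : List V) (z : V) (b : List V) :
    IsPathList E u v (a ++ z :: b) ↔ IsPathList E u z (a ++ [z]) ∧ IsPathList E z v (z :: b) := by
  have h1 : (a ++ z :: b).head? = (a ++ [z]).head? := by cases a <;> simp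
  have h2 : (a ++ z :: b).getLast? = (z :: b).getLast? := by
    simp [List.getLast?_append, List.getLast?_cons]
  have h3 : (a ++ z :: b).IsChain E ↔ (a ++ [z]).IsChain E ∧ (z :: b).IsChain E :=
    List.isChain_split
  have h4 : (a ++ [z]).getLast? = some z := by simp
  unfold IsPathList
  rw [h1, h2, h4]
  change _ ∧ _ ∧ List.IsChain E _ ↔ (_ ∧ _ ∧ List.IsChain E _) ∧ (_ ∧ _ ∧ List.IsChain E _)
  rw [h3]
  simp
  tauto

/-- if every path `P : u ⇝ v` contains a node of `B`, then
`d(u,v) = ⨅_{z ∈ B} (d(u,z) + d(z,v))`. -/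
theorem stmt10 {V : Type*} [Finite V] (E : V → V → Prop) (wt : V → V → ℝ≥0∞)
    (u v : V) (B : Set V)
    (hB : ∀ p : List V, IsPathList E u v p → ∃ z ∈ B, z ∈ p) :
    spDist E wt u v = ⨅ z ∈ B, spDist E wt u z + spDist E wt z v := by
  apply le_antisymm
  · refine le_iInf₂ fun z _ => ?_
    unfold spDist
    rw [ENNReal.iInf_add]
    refine le_iInf fun p => ?_
    rw [ENNReal.add_iInf]
    refine le_iInf fun q => ?_
    obtain ⟨p, hp⟩ := p
    obtain ⟨q, hq⟩ := q
    obtain ⟨s, rfl⟩ := List.getLast?_eq_some_iff.1 hp.2.1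
    obtain ⟨t, rfl⟩ := List.head?_eq_some_iff.1 hq.1
    refine (iInf_le _ ⟨s ++ z :: t, (aux_path E u v s z t).2 ⟨hp, hq⟩⟩).trans ?_
    exact (aux_weight wt s z t).le
  · refine le_iInf fun p => ?_
    obtain ⟨p, hp⟩ := p
    obtain ⟨z, hz, hzp⟩ := hB p hp
    obtain ⟨s, t, rfl⟩ := List.append_of_mem hzp
    obtain ⟨h1, h2⟩ := (aux_path E u v s z t).1 hp
    refine (iInf₂_le z hz).trans ?_
    change _ ≤ pathWeightSum wt (s ++ z :: t)
    rw [aux_weight]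
    exact add_le_add (iInf_le (fun p : {p : List V // IsPathList E u z p} => pathWeightSum wt p.val) ⟨_, h1⟩)
      (iInf_le (fun p : {p : List V // IsPathList E z v p} => pathWeightSum wt p.val) ⟨_, h2⟩)
end

section
/- There exist constants c_1 and c_2 such that every finite graph G on n ≥ 2 vertices of treewidth t admits a rooted tree decomposition of width at most c_1·(t+1) whose tree is balanced, namely of height at most c_2·log₂ n (every simple path from the root to a bag has length at most c_2·log₂ n). -/
/-- A tree decomposition of the simple graph `G` on `V`, with bags indexed by `ι`. -/
structure SGTreeDecomp (V : Type*) (ι : Type*) (G : SimpleGraph V) where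
  /-- the tree on the bags -/
  T : SimpleGraph ι
  isTree : T.IsTree
  /-- the bags -/
  bag : ι → Set V
  /-- every vertex belongs to some bag -/
  bag_mem : ∀ v : V, ∃ i, v ∈ bag i
  /-- every edge is contained in some bag -/
  bag_adj : ∀ ⦃u v : V⦄, G.Adj u v → ∃ i, u ∈ bag i ∧ v ∈ bag i
  /-- if `k` lies on the (unique) path from `i` to `j` in the tree, then
  `bag i ∩ bag j ⊆ bag k` -/
  bag_sep : ∀ ⦃i j k : ι⦄ (p : T.Walk i j), p.IsPath → k ∈ p.support →
      bag i ∩ bag j ⊆ bag k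

/-- The width of a tree decomposition: the maximum bag size minus one. -/
noncomputable def decompWidth {V : Type} {m : ℕ} {G : SimpleGraph V}
    (td : SGTreeDecomp V (Fin m) G) : ℕ :=
  (Finset.univ.sup fun i : Fin m => (td.bag i).ncard) - 1

/-- The treewidth of `G`: the minimum width over all its tree decompositions. -/
noncomputable def treewidth (V : Type) (G : SimpleGraph V) : ℕ :=
  sInf {w | ∃ m : ℕ, ∃ td : SGTreeDecomp V (Fin m) G, decompWidth td = w}


open Classical in
/-- rooted forest-like structure with bags, via a parent function -/
structure RDec (V ι : Type) where
  root : ι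
  par : ι → ι
  dep : ι → ℕ
  bag : ι → Finset V
  top : V → ι
  dep_root : dep root = 0
  dep_par : ∀ a, a ≠ root → dep a = dep (par a) + 1
  top_spec : ∀ v a, v ∈ bag a → a = top v ∨ (a ≠ root ∧ v ∈ bag (par a))

namespace RDec

variable {V ι : Type}

def tree (R : RDec V ι) : SimpleGraph ι where
  Adj a b := (a ≠ R.root ∧ R.par a = b) ∨ (b ≠ R.root ∧ R.par b = a)
  symm := ⟨fun a b h => by tauto⟩
  loopless := ⟨fun a h => by
    have h' : a ≠ R.root ∧ R.par a = a := by tauto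
    have := R.dep_par a h'.1
    rw [h'.2] at this
    omega⟩

lemma adj_par (R : RDec V ι) {a : ι} (h : a ≠ R.root) : R.tree.Adj a (R.par a) :=
  Or.inl ⟨h, rfl⟩

lemma walk_root (R : RDec V ι) : ∀ (n : ℕ) (a : ι), R.dep a = n →
    ∃ p : R.tree.Walk R.root a, p.length = n := by
  intro n
  induction n with
  | zero =>
    intro a ha
    have : a = R.root := by
      by_contra h
      have := R.dep_par a h
      omega
    subst this
    exact ⟨.nil, rfl⟩
  | succ n ih =>
    intro a ha
    have h : a ≠ R.root := by
      rintro rfl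
      have := R.dep_root
      omega
    obtain ⟨p, hp⟩ := ih (R.par a) (by have := R.dep_par a h; omega)
    exact ⟨p.concat (R.adj_par h).symm, by simp [hp]⟩

lemma dist_le (R : RDec V ι) (a : ι) : R.tree.dist R.root a ≤ R.dep a := by
  obtain ⟨p, hp⟩ := R.walk_root _ a rfl
  rw [← hp]
  exact SimpleGraph.dist_le p

lemma connected (R : RDec V ι) : R.tree.Connected := by
  rw [SimpleGraph.connected_iff_exists_forall_reachable]
  refine ⟨R.root, fun a => ?_⟩
  obtain ⟨p, _⟩ := R.walk_root _ a rfl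
  exact ⟨p⟩

lemma isTree [Fintype ι] (R : RDec V ι) : R.tree.IsTree := by
  classical
  rw [SimpleGraph.isTree_iff_connected_and_card]
  refine ⟨R.connected, le_antisymm ?_ R.connected.card_vert_le_card_edgeSet_add_one⟩
  have hsub : R.tree.edgeSet ⊆ ((Finset.univ.erase R.root).image (fun a => s(a, R.par a)) :
      Finset (Sym2 ι)) := by
    intro e
    induction e using Sym2.ind with
    | _ a b =>
      intro h
      rw [SimpleGraph.mem_edgeSet] at h
      simp only [Finset.coe_image, Set.mem_image, Finset.coe_erase]
      rcases h with ⟨h1, h2⟩ | ⟨h1, h2⟩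
      · exact ⟨a, by simp [h1], by rw [h2]⟩
      · exact ⟨b, by simp [h1], by rw [h2, Sym2.eq_swap]⟩
  have h1 := Set.ncard_le_ncard hsub (Finset.finite_toSet _)
  rw [Set.ncard_coe_finset] at h1
  have h2 := Finset.card_image_le (s := Finset.univ.erase R.root) (f := fun a => s(a, R.par a))
  rw [Finset.card_erase_of_mem (Finset.mem_univ _), Finset.card_univ] at h2
  have h3 : 0 < Fintype.card ι := Fintype.card_pos_iff.2 ⟨R.root⟩
  rw [Nat.card_eq_fintype_card (α := ι), Nat.card_coe_set_eq]
  omega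

lemma walk_top (R : RDec V ι) (v : V) : ∀ (n : ℕ) (a : ι), R.dep a = n → v ∈ R.bag a →
    ∃ p : R.tree.Walk a (R.top v), ∀ k ∈ p.support, v ∈ R.bag k := by
  intro n
  induction n with
  | zero =>
    intro a ha hv
    rcases R.top_spec v a hv with h | ⟨h, _⟩
    · subst h
      exact ⟨.nil, by simpa using hv⟩
    · have := R.dep_par a h
      omega
  | succ n ih =>
    intro a ha hv
    rcases R.top_spec v a hv with h | ⟨h, h'⟩
    · subst h
      exact ⟨.nil, by simpa using hv⟩
    · obtain ⟨p, hp⟩ := ih (R.par a) (by have := R.dep_par a h; omega) h'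
      refine ⟨.cons (R.adj_par h) p, ?_⟩
      intro k hk
      rw [SimpleGraph.Walk.support_cons, List.mem_cons] at hk
      rcases hk with rfl | hk
      · exact hv
      · exact hp k hk

lemma sep [Fintype ι] (R : RDec V ι) {i j k : ι} (p : R.tree.Walk i j) (hp : p.IsPath)
    (hk : k ∈ p.support) {v : V} (hi : v ∈ R.bag i) (hj : v ∈ R.bag j) : v ∈ R.bag k := by
  classical
  obtain ⟨p1, h1⟩ := R.walk_top v _ i rfl hi
  obtain ⟨p2, h2⟩ := R.walk_top v _ j rfl hj
  have := R.isTree.isAcyclic.path_unique ⟨p, hp⟩ (p1.append p2.reverse).toPath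
  have e : p = (p1.append p2.reverse).bypass := congrArg Subtype.val this
  rw [e] at hk
  have := SimpleGraph.Walk.support_bypass_subset_support _ hk
  rw [SimpleGraph.Walk.mem_support_append_iff, SimpleGraph.Walk.support_reverse,
    List.mem_reverse] at this
  rcases this with h | h
  · exact h1 k h
  · exact h2 k h

def toTD [Fintype ι] (R : RDec V ι) (G : SimpleGraph V) (h1 : ∀ v, ∃ a, v ∈ R.bag a)
    (h2 : ∀ u v, G.Adj u v → ∃ a, u ∈ R.bag a ∧ v ∈ R.bag a) : SGTreeDecomp V ι G where
  T := R.tree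
  isTree := R.isTree
  bag a := ↑(R.bag a)
  bag_mem := fun v => by simpa using h1 v
  bag_adj := fun u v h => by simpa using h2 u v h
  bag_sep := fun i j k p hp hk v hv => by
    have := R.sep p hp hk (v := v) (by simpa using hv.1) (by simpa using hv.2)
    simpa using this

/-- transport along an equivalence -/
def map {κ : Type} (R : RDec V ι) (e : ι ≃ κ) : RDec V κ where
  root := e R.root
  par a := e (R.par (e.symm a))
  dep a := R.dep (e.symm a)
  bag a := R.bag (e.symm a)
  top v := e (R.top v)
  dep_root := by simp [R.dep_root]
  dep_par a ha := by
    have := R.dep_par (e.symm a) (by rintro h; apply ha; simp [← h])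
    simpa using this
  top_spec v a ha := by
    rcases R.top_spec v _ ha with h | ⟨h, h'⟩
    · left; simp [← h]
    · right
      refine ⟨?_, by simpa using h'⟩
      rintro rfl
      simp at h

end RDec

lemma par_unique {ι : Type} {T : SimpleGraph ι} (hT : T.IsTree) (r : ι) {a b b' : ι}
    (h : T.Adj b a) (h' : T.Adj b' a) (hd : T.dist r a = T.dist r b + 1)
    (hd' : T.dist r a = T.dist r b' + 1) : b = b' := by
  obtain ⟨p, hp, hp'⟩ := hT.connected.exists_path_of_dist r b
  obtain ⟨q, hq, hq'⟩ := hT.connected.exists_path_of_dist r b'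
  have e1 : (p.concat h).IsPath := SimpleGraph.Walk.isPath_of_length_eq_dist _ (by simp; omega)
  have e2 : (q.concat h').IsPath := SimpleGraph.Walk.isPath_of_length_eq_dist _ (by simp; omega)
  have := congrArg Subtype.val (hT.isAcyclic.path_unique ⟨_, e1⟩ ⟨_, e2⟩)
  have := congrArg SimpleGraph.Walk.penultimate this
  simpa using this

lemma exists_par {ι : Type} {T : SimpleGraph ι} (hT : T.IsTree) (r a : ι) (h : a ≠ r) :
    ∃ b, T.Adj b a ∧ T.dist r a = T.dist r b + 1 := by
  obtain ⟨p, hp, hp'⟩ := hT.connected.exists_path_of_dist a r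
  cases p with
  | nil => exact absurd rfl h
  | @cons _ b _ hab p =>
    refine ⟨b, hab.symm, ?_⟩
    have h1 := SimpleGraph.dist_le p
    rw [SimpleGraph.Walk.length_cons, SimpleGraph.dist_comm] at hp'
    rw [SimpleGraph.dist_comm] at h1
    rcases hT.dist_eq_dist_add_one_of_adj r hab with h | h <;> omega

lemma path_up {ι : Type} {T : SimpleGraph ι} (hT : T.IsTree) (r : ι) {a t : ι}
    (p : T.Walk a t) : p.IsPath →
    (∀ b ∈ p.support, T.Adj b a → T.dist r a ≠ T.dist r b + 1) →
    T.dist r t = T.dist r a + p.length := by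
  induction p with
  | nil => intros; simp
  | @cons a b t hab p ih =>
    intro hp hn
    rw [SimpleGraph.Walk.cons_isPath_iff] at hp
    have h1 : T.dist r b = T.dist r a + 1 := by
      rcases hT.dist_eq_dist_add_one_of_adj r hab with h | h
      · exact absurd h (hn b (by simp) hab.symm)
      · exact h
    have := ih hp.1 (fun c hc hcb hd => by
      have := par_unique hT r hcb hab hd h1
      subst this
      exact hp.2 hc)
    rw [this, SimpleGraph.Walk.length_cons]
    omega

lemma exists_RDec {V ι : Type} [Fintype V] [Fintype ι] {G : SimpleGraph V}
    (td : SGTreeDecomp V ι G) : ∃ R : RDec V ι, (∀ a, (R.bag a : Set V) = td.bag a) ∧ ∀ v, v ∈ R.bag (R.top v) := by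
  classical
  obtain ⟨r⟩ := td.isTree.connected.nonempty
  have hpar : ∀ a, ∃ b, a ≠ r → td.T.Adj b a ∧ td.T.dist r a = td.T.dist r b + 1 := by
    intro a
    by_cases h : a = r
    · exact ⟨a, fun h' => absurd h h'⟩
    · obtain ⟨b, hb⟩ := exists_par td.isTree r a h
      exact ⟨b, fun _ => hb⟩
  choose par hpar using hpar
  have htop : ∀ v, ∃ t, v ∈ td.bag t ∧ ∀ a, v ∈ td.bag a → td.T.dist r t ≤ td.T.dist r a := by
    intro v
    obtain ⟨i, hi⟩ := td.bag_mem v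
    obtain ⟨t, ht, ht'⟩ := Finset.exists_min_image (Finset.univ.filter (fun a => v ∈ td.bag a))
      (fun a => td.T.dist r a) ⟨i, by simp [hi]⟩
    exact ⟨t, by simpa using ht, fun a ha => ht' a (by simp [ha])⟩
  choose top htop1 htop2 using htop
  refine ⟨⟨r, par, fun a => td.T.dist r a, fun a => (td.bag a).toFinset, top, by simp,
    fun a ha => (hpar a ha).2, ?_⟩, fun a => by simp, fun v => by simp [htop1]⟩
  intro v a ha
  simp only [Set.mem_toFinset] at ha ⊢
  by_cases hat : a = top v
  · exact Or.inl hat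
  right
  obtain ⟨p, hp, hp'⟩ := td.isTree.connected.exists_path_of_dist a (top v)
  have hlen : 0 < p.length := by
    rw [hp']
    exact td.isTree.connected.pos_dist_of_ne hat
  have hmin := htop2 v a ha
  by_contra hcon
  have := path_up td.isTree r p hp (fun b hb hba hd => by
    have har : a ≠ r := by
      rintro rfl
      simp at hd
    obtain ⟨h1, h2⟩ := hpar a har
    have := par_unique td.isTree r hba h1 hd h2
    subst this
    exact hcon ⟨har, td.bag_sep p hp hb ⟨ha, htop1 v⟩⟩)
  omega

namespace RDec
variable {V ι : Type}

lemma dep_iter (R : RDec V ι) (n : ℕ) : ∀ a, n ≤ R.dep a → R.dep (R.par^[n] a) = R.dep a - n := by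
  induction n with
  | zero => intro a _; simp
  | succ n ih =>
    intro a h
    have hr : a ≠ R.root := by
      rintro rfl
      have := R.dep_root
      omega
    have := R.dep_par a hr
    rw [Function.iterate_succ_apply, ih _ (by omega)]
    omega

lemma eq_root (R : RDec V ι) {a : ι} (h : R.dep a = 0) : a = R.root := by
  by_contra h'
  have := R.dep_par a h'
  omega

open Classical in
noncomputable def col (R : RDec V ι) (i a : ι) : Option ι :=
  if R.dep i < R.dep a ∧ R.par^[R.dep a - R.dep i] a = i then
    some (R.par^[R.dep a - R.dep i - 1] a) else none

lemma col_par (R : RDec V ι) {i a : ι} (ha : a ≠ R.root) (h : R.par a ≠ i) :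
    R.col i (R.par a) = R.col i a := by
  have hd := R.dep_par a ha
  unfold col
  by_cases h1 : R.dep i < R.dep (R.par a)
  · have e1 : R.dep a - R.dep i = (R.dep (R.par a) - R.dep i) + 1 := by omega
    have e2 : R.dep a - R.dep i - 1 = (R.dep (R.par a) - R.dep i - 1) + 1 := by omega
    rw [e2, e1, Function.iterate_succ_apply, Function.iterate_succ_apply]
    have h2 : R.dep i < R.dep a := by omega
    by_cases h3 : R.par^[R.dep (R.par a) - R.dep i] (R.par a) = i
    · rw [if_pos ⟨h1, h3⟩, if_pos ⟨h2, h3⟩]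
    · rw [if_neg (fun h => h3 h.2), if_neg (fun h => h3 h.2)]
  · rw [if_neg (by tauto), if_neg]
    rintro ⟨h2, h3⟩
    have e1 : R.dep a - R.dep i = 1 := by omega
    rw [e1] at h3
    exact h h3

lemma col_top (R : RDec V ι) {i : ι} {v : V} (hv : v ∉ R.bag i) : ∀ (n : ℕ) (a : ι),
    R.dep a = n → v ∈ R.bag a → R.col i a = R.col i (R.top v) := by
  intro n
  induction n with
  | zero =>
    intro a ha hva
    rcases R.top_spec v a hva with h | ⟨h, _⟩
    · rw [h]
    · exact absurd (R.eq_root ha) h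
  | succ n ih =>
    intro a ha hva
    rcases R.top_spec v a hva with h | ⟨h, h'⟩
    · rw [h]
    · rw [← ih (R.par a) (by have := R.dep_par a h; omega) h', R.col_par h]
      rintro rfl
      exact hv h'

lemma balanced [Fintype ι] (R : RDec V ι) (hR : ∀ v, v ∈ R.bag (R.top v)) (A : Finset V) :
    ∃ (i : ι) (cls : V → Option ι),
      (∀ u v k, u ∈ R.bag k → v ∈ R.bag k → u ∉ R.bag i → v ∉ R.bag i → cls u = cls v) ∧
      ∀ (c : Option ι) (B : Finset V), B ⊆ A → (∀ v ∈ B, v ∉ R.bag i ∧ cls v = c) →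
        2 * B.card ≤ A.card := by
  classical
  let desc : ι → ι → Prop := fun j a => R.dep j ≤ R.dep a ∧ R.par^[R.dep a - R.dep j] a = j
  let W : ι → Finset V := fun j => A.filter (fun v => desc j (R.top v))
  have hW : W R.root = A := by
    refine Finset.filter_true_of_mem fun v _ => ⟨by simp [R.dep_root], ?_⟩
    apply R.eq_root
    rw [R.dep_iter _ _ (by omega), R.dep_root]
    omega
  rcases Finset.eq_empty_or_nonempty A with rfl | hA
  · refine ⟨R.root, fun _ => none, by simp, ?_⟩
    intro c B hB _
    rw [Finset.subset_empty.1 hB]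
    simp
  obtain ⟨i, hi, hmax⟩ := Finset.exists_max_image
    (Finset.univ.filter (fun j => A.card < 2 * (W j).card)) R.dep
    ⟨R.root, by
      rw [Finset.mem_filter, hW]
      have := hA.card_pos
      exact ⟨Finset.mem_univ _, by omega⟩⟩
  rw [Finset.mem_filter] at hi
  refine ⟨i, fun v => R.col i (R.top v), ?_, ?_⟩
  · intro u v k hu hv hui hvi
    show R.col i (R.top u) = R.col i (R.top v)
    rw [← R.col_top hui _ k rfl hu, ← R.col_top hvi _ k rfl hv]
  · intro c B hBA hB
    cases c with
    | none =>
      have hd : Disjoint B (W i) := by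
        rw [Finset.disjoint_left]
        intro v hvB hvW
        obtain ⟨h1, h2⟩ := hB v hvB
        obtain ⟨_, h3, h4⟩ := Finset.mem_filter.1 hvW
        unfold col at h2
        beta_reduce at h2
        split_ifs at h2 with h5
        have h6 : R.dep (R.top v) - R.dep i = 0 := by
          by_contra h6
          exact h5 ⟨by omega, h4⟩
        rw [h6] at h4
        have h7 : R.top v = i := h4
        exact h1 (h7 ▸ hR v)
      have hs : B ∪ W i ⊆ A := Finset.union_subset hBA (Finset.filter_subset _ _)
      have := Finset.card_le_card hs
      rw [Finset.card_union_of_disjoint hd] at this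
      omega
    | some j =>
      by_contra hcon
      have hs : B ⊆ W j ∧ (B.Nonempty → R.dep j = R.dep i + 1) := by
        have key : ∀ v ∈ B, desc j (R.top v) ∧ R.dep j = R.dep i + 1 := by
          intro v hvB
          obtain ⟨h1, h2⟩ := hB v hvB
          unfold col at h2
          beta_reduce at h2
          split_ifs at h2 with h5
          have h6 := Option.some.inj h2
          have h7 := R.dep_iter (R.dep (R.top v) - R.dep i - 1) (R.top v) (by omega)
          rw [h6] at h7
          have h8 : R.dep j = R.dep i + 1 := by omega
          refine ⟨⟨by omega, ?_⟩, h8⟩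
          rw [h8]
          exact h6
        exact ⟨fun v hv => Finset.mem_filter.2 ⟨hBA hv, (key v hv).1⟩,
          fun ⟨v, hv⟩ => (key v hv).2⟩
      have h1 := Finset.card_le_card hs.1
      have h2 := hmax j (Finset.mem_filter.2 ⟨Finset.mem_univ _, by omega⟩)
      have h3 := hs.2 (Finset.card_pos.1 (by omega))
      omega

end RDec

open Classical in
/-- partial balanced decompositions -/
structure PDec {V : Type} (G : SimpleGraph V) (b : ℕ) (U S : Finset V) (h : ℕ) (ι : Type)
    extends RDec V ι where
  dep_le : ∀ a, dep a ≤ h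
  card_le : ∀ a, (bag a).card ≤ b
  bag_sub : ∀ a, bag a ⊆ U ∪ S
  root_sup : S ⊆ bag root
  mem : ∀ v ∈ U, ∃ a, v ∈ bag a
  adj : ∀ u ∈ U, ∀ v, G.Adj u v → ∃ a, u ∈ bag a ∧ v ∈ bag a

open Classical in
/-- gluing -/
lemma glue {V : Type} {G : SimpleGraph V} {b h : ℕ} {U S X : Finset V} {κ : Type}
    (cls : V → κ) (Uc Sc : κ → Finset V) (ι : κ → Type)
    (P : ∀ c, PDec G b (Uc c) (Sc c) h (ι c))
    (hX : X ⊆ U ∪ S) (hb : (S ∪ X).card ≤ b)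
    (hU : ∀ c v, v ∈ Uc c ↔ v ∈ U ∧ v ∉ S ∧ v ∉ X ∧ cls v = c)
    (hS : ∀ c, Sc c ⊆ S ∪ X) 
    (hadj : ∀ u ∈ U, ∀ v, G.Adj u v → v ∈ U ∪ S) :
    Nonempty (PDec G b U S (h + 1) (Option (Σ c, ι c))) := by
  let par : Option (Σ c, ι c) → Option (Σ c, ι c)
    | none => none
    | some ⟨c, a⟩ => if a = (P c).root then none else some ⟨c, (P c).par a⟩
  let dep : Option (Σ c, ι c) → ℕ
    | none => 0
    | some ⟨c, a⟩ => (P c).dep a + 1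
  let bag : Option (Σ c, ι c) → Finset V
    | none => S ∪ X
    | some ⟨c, a⟩ => (P c).bag a
  let top : V → Option (Σ c, ι c) := fun v =>
    if v ∈ S ∪ X then none else some ⟨cls v, (P (cls v)).top v⟩
  have hsub : ∀ c, Uc c ∪ Sc c ⊆ U ∪ S := by
    intro c v hv
    rcases Finset.mem_union.1 hv with hv | hv
    · exact Finset.mem_union_left _ ((hU c v).1 hv).1
    · rcases Finset.mem_union.1 (hS c hv) with hv | hv
      · exact Finset.mem_union_right _ hv
      · exact hX hv
  refine ⟨⟨⟨none, par, dep, bag, top, rfl, ?_, ?_⟩, ?_, ?_, ?_, ?_, ?_, ?_⟩⟩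
  · rintro (_ | ⟨c, a⟩) ha
    · exact absurd rfl ha
    · by_cases hr : a = (P c).root
      · simp [par, dep, hr, (P c).dep_root]
      · simp [par, dep, hr, (P c).dep_par a hr]
  · rintro v (_ | ⟨c, a⟩) hv
    · left
      have : v ∈ S ∪ X := hv
      simp only [top, if_pos this]
    · have hva : v ∈ (P c).bag a := hv
      by_cases hvS : v ∈ S ∪ X
      · right
        refine ⟨by simp, ?_⟩
        by_cases hr : a = (P c).root
        · simpa [par, bag, hr] using hvS
        · have hvc : v ∈ Sc c := by
            rcases Finset.mem_union.1 ((P c).bag_sub a hva) with h | h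
            · have := (hU c v).1 h
              simp only [Finset.mem_union] at hvS
              tauto
            · exact h
          have hroot := (P c).root_sup hvc
          have htop : (P c).root = (P c).top v := by
            rcases (P c).top_spec v _ hroot with h | h
            · exact h
            · exact absurd rfl h.1
          rcases (P c).top_spec v a hva with h | h
          · exact absurd (h.trans htop.symm) hr
          · simpa [par, bag, hr] using h.2
      · have hvc : v ∈ Uc c := by
          rcases Finset.mem_union.1 ((P c).bag_sub a hva) with h | h
          · exact h
          · exact absurd (hS c h) hvS
        have hc : cls v = c := ((hU c v).1 hvc).2.2.2
        subst hc
        simp only [top, if_neg hvS]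
        rcases (P (cls v)).top_spec v a hva with h | h
        · left; rw [← h]
        · right
          refine ⟨by simp, ?_⟩
          simpa [par, bag, h.1] using h.2
  · rintro (_ | ⟨c, a⟩)
    · simp [dep]
    · simpa [dep] using (P c).dep_le a
  · rintro (_ | ⟨c, a⟩)
    · exact hb
    · exact (P c).card_le a
  · rintro (_ | ⟨c, a⟩)
    · exact Finset.union_subset Finset.subset_union_right hX
    · exact ((P c).bag_sub a).trans (hsub c)
  · exact Finset.subset_union_left
  · intro v hv
    by_cases hvS : v ∈ S ∪ X
    · exact ⟨none, hvS⟩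
    · obtain ⟨a, ha⟩ := (P (cls v)).mem v ((hU _ v).2 (by
        simp only [Finset.mem_union] at hvS; tauto))
      exact ⟨some ⟨cls v, a⟩, ha⟩
  · intro u hu v huv
    have hv := hadj u hu v huv
    by_cases huS : u ∈ S ∪ X
    · by_cases hvS : v ∈ S ∪ X
      · exact ⟨none, huS, hvS⟩
      · have hvU : v ∈ Uc (cls v) := (hU _ v).2 (by
          simp only [Finset.mem_union] at hvS hv; tauto)
        obtain ⟨a, ha⟩ := (P (cls v)).adj v hvU u huv.symm
        exact ⟨some ⟨cls v, a⟩, ha.2, ha.1⟩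
    · have huU : u ∈ Uc (cls u) := (hU _ u).2 (by
          simp only [Finset.mem_union] at huS; tauto)
      obtain ⟨a, ha⟩ := (P (cls u)).adj u huU v huv
      exact ⟨some ⟨cls u, a⟩, ha⟩

open Classical in
lemma main_rec {V ι₀ : Type} [Fintype ι₀] {G : SimpleGraph V} (R : RDec V ι₀)
    (hR : ∀ v, v ∈ R.bag (R.top v)) (hRadj : ∀ u v, G.Adj u v → ∃ k, u ∈ R.bag k ∧ v ∈ R.bag k)
    (k : ℕ) (hk : ∀ a, (R.bag a).card ≤ k) (h : ℕ) : ∀ (U S : Finset V), U.card < 2 ^ h →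
    S.card ≤ 4 * k → (∀ u ∈ U, ∀ v, G.Adj u v → v ∈ U ∪ S) →
    ∃ (ι : Type) (_ : Fintype ι), Nonempty (PDec G (6 * k) U S h ι) := by
  induction h with
  | zero =>
    intro U S hU hS hadj
    have : U = ∅ := by
      rw [← Finset.card_eq_zero]
      simpa using hU
    subst this
    exact ⟨Unit, inferInstance, ⟨⟨⟨(), id, fun _ => 0, fun _ => S, fun _ => (), rfl,
      fun a ha => absurd rfl ha, fun _ _ _ => Or.inl rfl⟩, fun _ => le_rfl, fun _ => by show S.card ≤ _; omega,
      fun _ => by simp, by simp, by simp, by simp⟩⟩⟩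
  | succ h ih =>
    intro U S hU hS hadj
    obtain ⟨i, f, hf, hf'⟩ := R.balanced hR U
    obtain ⟨j, g, hg, hg'⟩ := R.balanced hR S
    let X := (R.bag i ∪ R.bag j) ∩ (U ∪ S)
    have hXc : X.card ≤ 2 * k := by
      have h1 := Finset.card_le_card (Finset.inter_subset_left :
        (R.bag i ∪ R.bag j) ∩ (U ∪ S) ⊆ _)
      have h2 := Finset.card_union_le (R.bag i) (R.bag j)
      have h3 := hk i
      have h4 := hk j
      show ((R.bag i ∪ R.bag j) ∩ (U ∪ S)).card ≤ _
      omega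
    have hX : ∀ v ∈ U ∪ S, v ∉ X → v ∉ R.bag i ∧ v ∉ R.bag j := by
      intro v hv hvX
      simp only [X, Finset.mem_inter, Finset.mem_union] at hv hvX
      tauto
    let cls : V → Option ι₀ × Option ι₀ := fun v => (f v, g v)
    let Uc : Option ι₀ × Option ι₀ → Finset V := fun c =>
      U.filter (fun v => v ∉ S ∧ v ∉ X ∧ cls v = c)
    let Sc : Option ι₀ × Option ι₀ → Finset V := fun c =>
      X ∪ S.filter (fun v => v ∉ X ∧ cls v = c)
    have hcls : ∀ u ∈ U ∪ S, ∀ v ∈ U ∪ S, u ∉ X → v ∉ X → G.Adj u v → cls u = cls v := by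
      intro u hu v hv hu' hv' huv
      obtain ⟨k, hk1, hk2⟩ := hRadj u v huv
      exact Prod.ext (hf u v k hk1 hk2 (hX u hu hu').1 (hX v hv hv').1)
        (hg u v k hk1 hk2 (hX u hu hu').2 (hX v hv hv').2)
    have hrec : ∀ c, ∃ (ι : Type) (_ : Fintype ι), Nonempty (PDec G (6 * k) (Uc c) (Sc c) h ι) := by
      intro c
      apply ih
      · have := hf' c.1 (Uc c) (Finset.filter_subset _ _) (fun v hv => by
          obtain ⟨h1, h2, h3, h4⟩ := Finset.mem_filter.1 hv
          exact ⟨(hX v (Finset.mem_union_left _ h1) h3).1, by rw [← h4]⟩)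
        rw [pow_succ] at hU
        omega
      · have := hg' c.2 (S.filter (fun v => v ∉ X ∧ cls v = c)) (Finset.filter_subset _ _)
          (fun v hv => by
            obtain ⟨h1, h3, h4⟩ := Finset.mem_filter.1 hv
            exact ⟨(hX v (Finset.mem_union_right _ h1) h3).2, by rw [← h4]⟩)
        have h2 := Finset.card_union_le X (S.filter (fun v => v ∉ X ∧ cls v = c))
        show (X ∪ S.filter (fun v => v ∉ X ∧ cls v = c)).card ≤ _
        omega
      · intro u hu v huv
        obtain ⟨h1, h2, h3, h4⟩ := Finset.mem_filter.1 hu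
        have hv := hadj u h1 v huv
        by_cases hvX : v ∈ X
        · exact Finset.mem_union_right _ (Finset.mem_union_left _ hvX)
        have := hcls u (Finset.mem_union_left _ h1) v hv h3 hvX huv
        rw [h4] at this
        by_cases hvS : v ∈ S
        · exact Finset.mem_union_right _ (Finset.mem_union_right _
            (Finset.mem_filter.2 ⟨hvS, hvX, this.symm⟩))
        · refine Finset.mem_union_left _ (Finset.mem_filter.2 ⟨?_, hvS, hvX, this.symm⟩)
          exact (Finset.mem_union.1 hv).resolve_right hvS
    choose ι hι hP using hrec
    refine ⟨Option (Σ c, ι c), inferInstance, glue (X := X) cls Uc Sc ι (fun c => (hP c).some)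
      Finset.inter_subset_right ?_ ?_ ?_ hadj⟩
    · have := Finset.card_union_le S X
      omega
    · intro c v
      simp only [Uc, Finset.mem_filter]
    · intro c
      exact Finset.union_subset Finset.subset_union_right
        ((Finset.filter_subset _ _).trans Finset.subset_union_left)

lemma exists_td {V : Type} [Fintype V] (G : SimpleGraph V) :
    ∃ m : ℕ, ∃ td : SGTreeDecomp V (Fin m) G, decompWidth td = treewidth V G := by
  have : treewidth V G ∈ {w | ∃ m : ℕ, ∃ td : SGTreeDecomp V (Fin m) G, decompWidth td = w} := by
    apply Nat.sInf_mem
    let R : RDec V (Fin 1) := ⟨0, id, fun _ => 0, fun _ => Finset.univ, fun _ => 0, rfl,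
      fun a ha => absurd (Subsingleton.elim _ _) ha, fun _ _ _ => Or.inl (Subsingleton.elim _ _)⟩
    exact ⟨_, 1, R.toTD G (fun v => ⟨0, Finset.mem_univ _⟩)
      (fun u v _ => ⟨0, Finset.mem_univ _, Finset.mem_univ _⟩), rfl⟩
  exact this

/-- there are constants `c₁, c₂` such that every finite graph on
`n ≥ 2` vertices of treewidth `t` admits a rooted tree decomposition of width at most
`c₁·(t+1)` that is balanced: every bag is at tree distance at most `c₂·log₂ n` from
the root (in a tree, the unique simple path from the root to a bag has length equal
to this distance). -/
theorem stmt12 :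
    ∃ c₁ c₂ : ℕ, ∀ (V : Type) [Fintype V] (G : SimpleGraph V),
      2 ≤ Fintype.card V →
      ∃ (m : ℕ) (td : SGTreeDecomp V (Fin m) G) (root : Fin m),
        decompWidth td ≤ c₁ * (treewidth V G + 1) ∧
        ∀ i : Fin m, td.T.dist root i ≤ c₂ * Nat.log 2 (Fintype.card V) := by
  classical
  refine ⟨6, 2, ?_⟩
  intro V _ G hn
  obtain ⟨m₀, td, htd⟩ := exists_td G
  obtain ⟨R, hR1, hR2⟩ := exists_RDec td
  have hk : ∀ a, (R.bag a).card ≤ treewidth V G + 1 := by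
    intro a
    have h1 : (td.bag a).ncard ≤ Finset.univ.sup fun i : Fin m₀ => (td.bag i).ncard :=
      Finset.le_sup (f := fun i : Fin m₀ => (td.bag i).ncard) (Finset.mem_univ a)
    rw [← hR1 a, Set.ncard_coe_finset] at h1
    unfold decompWidth at htd
    omega
  have hadj : ∀ u v, G.Adj u v → ∃ k, u ∈ R.bag k ∧ v ∈ R.bag k := by
    intro u v h
    obtain ⟨i, hi⟩ := td.bag_adj h
    rw [← hR1 i] at hi
    exact ⟨i, by simpa using hi⟩
  obtain ⟨ι, _, ⟨P⟩⟩ := main_rec R hR2 hadj (treewidth V G + 1) hk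
    (Nat.log 2 (Fintype.card V) + 1) Finset.univ ∅
    (by rw [Finset.card_univ]; exact Nat.lt_pow_succ_log_self (by norm_num) _) (by simp)
    (by simp)
  let Q := P.toRDec.map (Fintype.equivFin ι)
  refine ⟨Fintype.card ι, Q.toTD G ?_ ?_, Q.root, ?_, ?_⟩
  · intro v
    obtain ⟨a, ha⟩ := P.mem v (Finset.mem_univ _)
    exact ⟨Fintype.equivFin ι a, by simpa [Q, RDec.map] using ha⟩
  · intro u v h
    obtain ⟨a, ha⟩ := P.adj u (Finset.mem_univ _) v h
    exact ⟨Fintype.equivFin ι a, by simpa [Q, RDec.map] using ha⟩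
  · unfold decompWidth
    refine (Nat.sub_le _ _).trans (Finset.sup_le fun i _ => ?_)
    show (↑(P.bag ((Fintype.equivFin ι).symm i)) : Set V).ncard ≤ _
    rw [Set.ncard_coe_finset]
    exact P.card_le _
  · intro i
    have h1 : Q.tree.dist Q.root i ≤ Q.dep i := Q.dist_le i
    have h2 : Q.dep i ≤ Nat.log 2 (Fintype.card V) + 1 := P.dep_le _
    have h3 : 0 < Nat.log 2 (Fintype.card V) := Nat.log_pos (by norm_num) hn
    show Q.tree.dist Q.root i ≤ _
    omega
end

section
/- Let A = {A_1,…,A_k} be a single-entry single-exit recursive state machine over the tropical semiring ([0,∞], min, +, ∞, 0), i.e., with nonnegative edge weights, where k is the number of CSMs. Then for all nodes u,v belonging to the same CSM, the (unbounded) configuration distance between the empty-stack configurations equals the bounded-height distance with height bound k: d((u,∅),(v,∅)) = d((u,∅),(v,∅), k). Equivalently, with nonnegative weights the same-context distance is realized (as an infimum) by execution paths that carry at most k boxes on the stack at any time. -/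
open scoped ENNReal

/-- The nodes of a component state machine (CSM) with internal nodes drawn from `N`
and boxes drawn from `B`: internal nodes, the unique entry `En`, the unique exit `Ex`,
the call nodes `(En_{Y(b)}, b)` and the return nodes `(Ex_{Y(b)}, b)`. -/
inductive CNode (N B : Type*) : Type _
  | internal (x : N)
  | entry
  | exit
  | call (b : B)
  | ret (b : B)

/-- Nodes allowed as sources of internal edges: `N ∪ {En} ∪ R`. -/
def CNode.IsSrc {N B : Type*} : CNode N B → Prop
  | .internal _ => True
  | .entry => True
  | .ret _ => True
  | _ => False

/-- Nodes allowed as targets of internal edges: `N ∪ {Ex} ∪ C`. -/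
def CNode.IsTgt {N B : Type*} : CNode N B → Prop
  | .internal _ => True
  | .exit => True
  | .call _ => True
  | _ => False

/-- A single-entry single-exit recursive state machine with `k` component state
machines (CSMs) and edge weights in `Q`.  CSM `i` has internal nodes `N i`,
boxes `Box i` mapped to CSM indices by `Y i`, internal edges `E i` (from
`N ∪ {En} ∪ R` to `N ∪ {Ex} ∪ C`) weighted by `wt i`. -/
structure RSM (k : ℕ) (Q : Type*) where
  /-- internal nodes of each CSM -/
  N : Fin k → Type
  /-- boxes of each CSM -/
  Box : Fin k → Type
  nFinite : ∀ i, Finite (N i)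
  boxFinite : ∀ i, Finite (Box i)
  /-- each box corresponds to a CSM -/
  Y : ∀ i, Box i → Fin k
  /-- internal edges -/
  E : ∀ i, CNode (N i) (Box i) → CNode (N i) (Box i) → Prop
  /-- weights of the internal edges -/
  wt : ∀ i, CNode (N i) (Box i) → CNode (N i) (Box i) → Q
  E_src : ∀ i u v, E i u v → u.IsSrc
  E_tgt : ∀ i u v, E i u v → v.IsTgt

/-- A configuration of an RSM: a node of some CSM together with a stack, a finite
sequence of boxes. Its stack height is the length of the stack. -/
structure Config {k : ℕ} {Q : Type*} (R : RSM k Q) where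
  /-- the index of the CSM of the current node -/
  i : Fin k
  /-- the current node -/
  node : CNode (R.N i) (R.Box i)
  /-- the stack of boxes -/
  stack : List (Σ j : Fin k, R.Box j)

/-- The labeled global edges between configurations: internal edges (staying in the
same CSM, targeting an internal node), entry edges (pushing the called box), and
return edges (popping the box `b`, ending at the return node `(Ex, b)`). -/
inductive GEdge {k : ℕ} {Q : Type*} (R : RSM k Q) : Config R → Q → Config R → Prop
  | internal {i : Fin k} {v₁ : CNode (R.N i) (R.Box i)} {x : R.N i}
      (L : List (Σ j : Fin k, R.Box j)) (h : R.E i v₁ (.internal x)) :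
      GEdge R ⟨i, v₁, L⟩ (R.wt i v₁ (.internal x)) ⟨i, .internal x, L⟩
  | entry {i : Fin k} {v₁ : CNode (R.N i) (R.Box i)} {b : R.Box i}
      (L : List (Σ j : Fin k, R.Box j)) (h : R.E i v₁ (.call b)) :
      GEdge R ⟨i, v₁, L⟩ (R.wt i v₁ (.call b)) ⟨R.Y i b, .entry, L ++ [⟨i, b⟩]⟩
  | ret {i : Fin k} {v₁ : CNode (R.N i) (R.Box i)} {j : Fin k} {b : R.Box j}
      (L : List (Σ j : Fin k, R.Box j)) (h : R.E i v₁ .exit) (hY : R.Y j b = i) :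
      GEdge R ⟨i, v₁, L ++ [⟨j, b⟩]⟩ (R.wt i v₁ .exit) ⟨j, .ret b, L⟩

/-- `ExecT R c c' w h`: over the tropical semiring, there is an execution path from
`c` to `c'` of weight `w` (the sum of the labels of its global edges, `0` for the
empty sum) all of whose configurations have stack height at most `h`. -/
inductive ExecT {k : ℕ} (R : RSM k ℝ≥0∞) : Config R → Config R → ℝ≥0∞ → ℕ → Prop
  | refl (c : Config R) (h : ℕ) (hc : c.stack.length ≤ h) : ExecT R c c 0 h
  | tail {c c' c'' : Config R} {w σ : ℝ≥0∞} {h : ℕ} (hp : ExecT R c c' w h)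
      (he : GEdge R c' σ c'') (hc : c''.stack.length ≤ h) : ExecT R c c'' (w + σ) h

/-- The bounded-height configuration distance `d(c, c', h)`: the infimum of the
weights of all execution paths from `c` to `c'` of stack height at most `h`
(`∞` if none exists). -/
noncomputable def tdistB {k : ℕ} (R : RSM k ℝ≥0∞) (c c' : Config R) (h : ℕ) : ℝ≥0∞ :=
  sInf {w | ExecT R c c' w h}

/-- The configuration distance `d(c, c')`: the infimum of the weights of all
execution paths from `c` to `c'`, with no restriction on the stack height
(`∞` if none exists). -/
noncomputable def tdist {k : ℕ} (R : RSM k ℝ≥0∞) (c c' : Config R) : ℝ≥0∞ :=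
  sInf {w | ∃ h : ℕ, ExecT R c c' w h}

/-- Balanced paths in one component, calling (nested) only components in `S`; last index: size. -/
inductive Bal {k : ℕ} (R : RSM k ℝ≥0∞) (S : Finset (Fin k)) :
    ∀ i : Fin k, CNode (R.N i) (R.Box i) → CNode (R.N i) (R.Box i) → ℝ≥0∞ → ℕ → Prop
  | refl (i : Fin k) (u : CNode (R.N i) (R.Box i)) : Bal R S i u u 0 0
  | internal {i : Fin k} {u v : CNode (R.N i) (R.Box i)} {w : ℝ≥0∞} {n : ℕ} {x : R.N i}
      (hp : Bal R S i u v w n) (he : R.E i v (.internal x)) :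
      Bal R S i u (.internal x) (w + R.wt i v (.internal x)) (n + 1)
  | call {i : Fin k} {u v : CNode (R.N i) (R.Box i)} {w : ℝ≥0∞} {n : ℕ} {b : R.Box i}
      {t : CNode (R.N (R.Y i b)) (R.Box (R.Y i b))} {w' : ℝ≥0∞} {m : ℕ}
      (hp : Bal R S i u v w n) (he : R.E i v (.call b)) (hS : R.Y i b ∈ S)
      (hb : Bal R S (R.Y i b) .entry t w' m) (hx : R.E (R.Y i b) t .exit) :
      Bal R S i u (.ret b) (w + (R.wt i v (.call b) + (w' + R.wt (R.Y i b) t .exit))) (n + m + 1)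

theorem Bal.trans {k : ℕ} {R : RSM k ℝ≥0∞} {S : Finset (Fin k)} {i : Fin k}
    {u v t : CNode (R.N i) (R.Box i)} {w w' : ℝ≥0∞} {n m : ℕ}
    (h1 : Bal R S i u v w n) (h2 : Bal R S i v t w' m) : ∃ l, Bal R S i u t (w + w') l := by
  induction h2 with
  | refl => exact ⟨n, by simpa using h1⟩
  | internal hp he ih =>
    obtain ⟨l, hl⟩ := ih h1
    exact ⟨_, by rw [← add_assoc]; exact hl.internal he⟩
  | call hp he hS hb hx ih _ =>
    obtain ⟨l, hl⟩ := ih h1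
    exact ⟨_, by rw [← add_assoc]; exact hl.call he hS hb hx⟩

theorem Bal.split {k : ℕ} {R : RSM k ℝ≥0∞} {S : Finset (Fin k)} (j : Fin k) {i : Fin k}
    {u v : CNode (R.N i) (R.Box i)} {w : ℝ≥0∞} {n : ℕ} (h : Bal R S i u v w n) :
    Bal R (S.erase j) i u v w n ∨
    ∃ (t : CNode (R.N j) (R.Box j)) (w' : ℝ≥0∞) (m : ℕ), m < n ∧ Bal R S j .entry t w' m ∧
      R.E j t .exit ∧ w' + R.wt j t .exit ≤ w := by
  induction h with
  | refl i u => exact .inl (.refl i u)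
  | internal hp he ih =>
    rcases ih with h | ⟨t, w', m, hm, h1, h2, h3⟩
    · exact .inl (h.internal he)
    · exact .inr ⟨t, w', m, by omega, h1, h2, h3.trans le_self_add⟩
  | @call i u v w n b t w' m hp he hS hb hx ih1 ih2 =>
    by_cases hj : R.Y i b = j
    · subst hj
      exact .inr ⟨t, w', m, by omega, hb, hx, le_add_self.trans le_add_self⟩
    rcases ih1 with h | ⟨t, w', m, hm, h1, h2, h3⟩
    · rcases ih2 with h' | ⟨t, w', m, hm, h1, h2, h3⟩
      · exact .inl (h.call he (Finset.mem_erase.2 ⟨hj, hS⟩) h' hx)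
      · exact .inr ⟨t, w', m, by omega, h1, h2,
          h3.trans (le_self_add.trans (le_add_self.trans le_add_self))⟩
    · exact .inr ⟨t, w', m, by omega, h1, h2, h3.trans le_self_add⟩

theorem Bal.body {k : ℕ} {R : RSM k ℝ≥0∞} {S : Finset (Fin k)} (j : Fin k) (n : ℕ) :
    ∀ (t : CNode (R.N j) (R.Box j)) (w : ℝ≥0∞), Bal R S j .entry t w n → R.E j t .exit →
    ∃ (t' : CNode (R.N j) (R.Box j)) (w' : ℝ≥0∞) (m : ℕ), m ≤ n ∧
      Bal R (S.erase j) j .entry t' w' m ∧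
      R.E j t' .exit ∧ w' + R.wt j t' .exit ≤ w + R.wt j t .exit := by
  induction n using Nat.strong_induction_on with
  | _ n ih =>
    intro t w h hx
    rcases h.split j with h | ⟨t, w', m, hm, h1, h2, h3⟩
    · exact ⟨t, w, n, le_rfl, h, hx, le_rfl⟩
    · obtain ⟨t', w'', m', hm', a, b, c⟩ := ih m hm t w' h1 h2
      exact ⟨t', w'', m', by omega, a, b, c.trans (h3.trans le_self_add)⟩

theorem ExecT.trans' {k : ℕ} {R : RSM k ℝ≥0∞} {c c' c'' : Config R} {w w' : ℝ≥0∞} {h : ℕ}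
    (h1 : ExecT R c c' w h) (h2 : ExecT R c' c'' w' h) : ExecT R c c'' (w + w') h := by
  induction h2 with
  | refl => simpa using h1
  | tail hp he hc ih => rw [← add_assoc]; exact (ih h1).tail he hc

theorem Bal.exec {k : ℕ} {R : RSM k ℝ≥0∞} (n : ℕ) : ∀ (S : Finset (Fin k)) (i : Fin k)
    (u v : CNode (R.N i) (R.Box i)) (w : ℝ≥0∞), Bal R S i u v w n →
    ∀ (h : ℕ) (L : List (Σ j : Fin k, R.Box j)), L.length + S.card ≤ h →
    ∃ w' ≤ w, ExecT R ⟨i, u, L⟩ ⟨i, v, L⟩ w' h := by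
  induction n using Nat.strong_induction_on with
  | _ n ih =>
    intro S i u v w hB h L hL
    cases hB with
    | refl => exact ⟨0, le_rfl, .refl _ _ (by simp; omega)⟩
    | internal hp he =>
      obtain ⟨w', hw, hE⟩ := ih _ (by omega) S i _ _ _ hp h L hL
      exact ⟨_, by gcongr, hE.tail (.internal L he) (by simp; omega)⟩
    | @call _ _ v w n b t w' m hp he hS hb hx =>
      obtain ⟨w1, hw, hE⟩ := ih _ (by omega) S i _ _ _ hp h L hL
      obtain ⟨t', w2, m', hm, hb', hx', hle⟩ := Bal.body _ _ _ _ hb hx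
      have hc := Finset.card_erase_add_one hS
      obtain ⟨w3, hw3, hE3⟩ := ih m' (by omega) _ _ _ _ _ hb' h (L ++ [⟨i, b⟩])
        (by simp; omega)
      refine ⟨_, ?_, ((hE.tail (.entry L he) (by simp; omega)).trans' hE3).tail
        (.ret L hx' rfl) (by simp; omega)⟩
      calc _ = w1 + (R.wt i v (.call b) + (w3 + R.wt (R.Y i b) t' .exit)) := by
            simp only [add_assoc]
        _ ≤ w1 + (R.wt i v (.call b) + (w2 + R.wt (R.Y i b) t' .exit)) := by gcongr
        _ ≤ _ := by gcongr

/-- Decomposition of a path from `(u₀, ∅)`; the stack is stored reversed. -/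
inductive Pre {k : ℕ} (R : RSM k ℝ≥0∞) (i₀ : Fin k) (u₀ : CNode (R.N i₀) (R.Box i₀)) :
    List (Σ j : Fin k, R.Box j) → ∀ i : Fin k, CNode (R.N i) (R.Box i) → ℝ≥0∞ → Prop
  | base {v : CNode (R.N i₀) (R.Box i₀)} {w : ℝ≥0∞} {n : ℕ}
      (h : Bal R Finset.univ i₀ u₀ v w n) : Pre R i₀ u₀ [] i₀ v w
  | push {L : List (Σ j : Fin k, R.Box j)} {i : Fin k} {v : CNode (R.N i) (R.Box i)}
      {w : ℝ≥0∞} {b : R.Box i} {t : CNode (R.N (R.Y i b)) (R.Box (R.Y i b))} {w' : ℝ≥0∞} {n : ℕ}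
      (hp : Pre R i₀ u₀ L i v w) (he : R.E i v (.call b))
      (h : Bal R Finset.univ (R.Y i b) .entry t w' n) :
      Pre R i₀ u₀ (⟨i, b⟩ :: L) (R.Y i b) t (w + R.wt i v (.call b) + w')

theorem Pre.extend {k : ℕ} {R : RSM k ℝ≥0∞} {i₀ : Fin k} {u₀ : CNode (R.N i₀) (R.Box i₀)}
    {L : List (Σ j : Fin k, R.Box j)} {i : Fin k} {v v' : CNode (R.N i) (R.Box i)}
    {w w' : ℝ≥0∞} {n : ℕ} (h : Pre R i₀ u₀ L i v w) (hB : Bal R Finset.univ i v v' w' n) :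
    Pre R i₀ u₀ L i v' (w + w') := by
  cases h with
  | base h => obtain ⟨l, hl⟩ := h.trans hB; exact .base hl
  | push hp he h =>
    obtain ⟨l, hl⟩ := h.trans hB
    rw [add_assoc _ _ w']
    exact .push hp he hl

theorem ExecT.pre {k : ℕ} {R : RSM k ℝ≥0∞} {i₀ : Fin k} {u₀ : CNode (R.N i₀) (R.Box i₀)}
    {c c' : Config R} {w : ℝ≥0∞} {h : ℕ} (hE : ExecT R c c' w h) (hc : c = ⟨i₀, u₀, []⟩) :
    Pre R i₀ u₀ c'.stack.reverse c'.i c'.node w := by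
  induction hE with
  | refl => subst hc; exact .base (.refl _ _)
  | tail hp he _ ih =>
    cases he with
    | internal L h =>
      have := ih.extend ((Bal.refl _ _).internal h)
      simpa using this
    | entry L h =>
      have := Pre.push ih h (.refl _ _)
      simpa using this
    | @ret i v₁ j b L h hY =>
      simp only [List.reverse_append, List.reverse_cons, List.reverse_nil, List.nil_append,
        List.cons_append] at ih
      cases ih with
      | push hp' he' hB =>
        have := hp'.extend ((Bal.refl _ _).call he' (Finset.mem_univ _) hB h)
        simpa [add_assoc] using this

/-- for an RSM with `k` CSMs over the tropical semiring
`([0,∞], min, +, ∞, 0)`, for all nodes `u, v` of the same CSM, the unbounded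
same-context configuration distance equals the bounded-height distance with height
bound `k`: `d((u,∅),(v,∅)) = d((u,∅),(v,∅),k)`. -/
theorem stmt15 {k : ℕ} (R : RSM k ℝ≥0∞) (i : Fin k)
    (u v : CNode (R.N i) (R.Box i)) :
    tdist R ⟨i, u, []⟩ ⟨i, v, []⟩ = tdistB R ⟨i, u, []⟩ ⟨i, v, []⟩ k := by
  apply le_antisymm
  · refine le_sInf fun w hw => sInf_le ⟨k, hw⟩
  · refine le_sInf ?_
    rintro w ⟨h, hE⟩
    have hP := hE.pre rfl
    simp only [List.reverse_nil] at hP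
    cases hP with
    | base hB =>
      obtain ⟨w', hw, hE'⟩ := Bal.exec _ _ _ _ _ _ hB k [] (by simp)
      exact le_trans (sInf_le (show w' ∈ {w | ExecT R ⟨i, u, []⟩ ⟨i, v, []⟩ w k} from hE')) hw
end
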